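/- Let S be a finite nonempty set, P : S × S → [0,1], and a : S → [0,1]. Define the operator f by f(Z)(s) := min( a(s), max_{t ∈ S} min( P(s,t), Z(t), r_P(t) ) ), and the iteration Z₀(s) := 1 for all s and Z_{i+1} := f(Z_i). Then the sequence (Z_i) is pointwise nonincreasing, and there exists k such that Z_{k+1} = Z_k; moreover for every such k, Z_k equals the greatest fixpoint A of f, where A(s) := sup over all runs σ from s of min( val_P(σ), inf_{i ≥ 0} a(σ i) ). -/

import Mathlib

/-!
The operator `f = fOp P a` is monotone, so its iterates from the top element decrease. All values
of the iterates lie in the finite set `{1} ∪ ran a ∪ ran P ∪ ran r_P`, because `min` and finite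
maxima create no new values; hence the decreasing sequence repeats and therefore stabilizes.

The function `A = alwaysSem P a` is a post-fixpoint of `f` (`alwaysSem_le_fOp`: drop the first step
of a run), so it lies below every iterate. Conversely every post-fixpoint `Z ≤ f(Z)` lies below `A`
(`le_alwaysSem`): since `S` is finite the maximum in `f(Z)(s)` is attained at some `t(s)`, and
iterating `s ↦ t(s)` gives a single run along which `P` and `a` stay above `Z(s)`. A stabilization
point is thus squeezed between the two bounds.
-/

/-- `[0,1]` as a complete lattice. -/
instance : Fact ((0:ℝ) ≤ 1) := ⟨zero_le_one⟩

/-- The value of a run `σ`: `inf_{i ≥ 0} P(σ i, σ (i+1))`. -/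
noncomputable def valP {S : Type*} (P : S → S → unitInterval) (σ : ℕ → S) : unitInterval :=
  ⨅ i : ℕ, P (σ i) (σ (i + 1))

/-- `r_P(s)`: the supremum of the values of all runs starting at `s`. -/
noncomputable def rP {S : Type*} (P : S → S → unitInterval) (s : S) : unitInterval :=
  ⨆ σ : {σ : ℕ → S // σ 0 = s}, valP P σ.1

/-- `A(s) = Po(s ⊨ □Φ)`: the sup over runs `σ` from `s` of
`min(val_P(σ), inf_{i≥0} a(σ i))`, where `a = ||Φ||`. -/
noncomputable def alwaysSem {S : Type*} (P : S → S → unitInterval)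
    (a : S → unitInterval) (s : S) : unitInterval :=
  ⨆ σ : {σ : ℕ → S // σ 0 = s}, min (valP P σ.1) (⨅ i : ℕ, a (σ.1 i))

/-- The operator `f(Z)(s) = min( a(s), max_{t} min(P(s,t), Z(t), r_P(t)) )`. -/
noncomputable def fOp {S : Type*} [Fintype S] (P : S → S → unitInterval)
    (a : S → unitInterval) (Z : S → unitInterval) : S → unitInterval :=
  fun s => min (a s) (⨆ t : S, min (P s t) (min (Z t) (rP P t)))

theorem fOp_mono {S : Type*} [Fintype S] (P : S → S → unitInterval) (a : S → unitInterval) :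
    Monotone (fOp P a) := by
  intro X Y h s
  exact min_le_min le_rfl
    (iSup_mono fun t => min_le_min le_rfl (min_le_min (h t) le_rfl))

theorem alwaysSem_le_fOp {S : Type*} [Fintype S] (P : S → S → unitInterval)
    (a : S → unitInterval) : alwaysSem P a ≤ fOp P a (alwaysSem P a) := by
  intro s
  refine iSup_le ?_
  rintro ⟨σ, rfl⟩
  have hval : valP P σ ≤ valP P (fun i => σ (i + 1)) :=
    le_iInf fun i => iInf_le (fun i => P (σ i) (σ (i + 1))) (i + 1)
  have ha : (⨅ i, a (σ i)) ≤ ⨅ i, a (σ (i + 1)) :=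
    le_iInf fun i => iInf_le (fun i => a (σ i)) (i + 1)
  refine le_min ((min_le_right _ _).trans (iInf_le (fun i => a (σ i)) 0)) ?_
  refine le_trans ?_ (le_iSup _ (σ 1))
  refine le_min ((min_le_left _ _).trans (iInf_le (fun i => P (σ i) (σ (i + 1))) 0))
    (le_min ?_ ?_)
  · exact (min_le_min hval ha).trans
      (le_iSup (fun τ : {τ : ℕ → S // τ 0 = σ 1} => min (valP P τ.1) (⨅ i : ℕ, a (τ.1 i)))
        ⟨fun i => σ (i + 1), rfl⟩)
  · exact ((min_le_left _ _).trans hval).trans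
      (le_iSup (fun τ : {τ : ℕ → S // τ 0 = σ 1} => valP P τ.1) ⟨fun i => σ (i + 1), rfl⟩)

/-- Every post-fixpoint of `fOp P a` lies below `alwaysSem P a`: following maximizing successors
yields a run witnessing the bound. -/
theorem le_alwaysSem {S : Type*} [Fintype S] [Nonempty S] (P : S → S → unitInterval)
    (a : S → unitInterval) (Z : S → unitInterval) (hZ : Z ≤ fOp P a Z) :
    Z ≤ alwaysSem P a := by
  have hmax : ∀ s, ∃ t, min (P s t) (min (Z t) (rP P t))
      = ⨆ t : S, min (P s t) (min (Z t) (rP P t)) := fun s => exists_eq_ciSup_of_finite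
  choose t ht using hmax
  have hle : ∀ s, Z s ≤ min (P s (t s)) (min (Z (t s)) (rP P (t s))) := fun s =>
    ((hZ s).trans (min_le_right _ _)).trans (ht s).ge
  intro s
  have hrun : ∀ i, Z s ≤ Z (t^[i] s) := by
    intro i
    induction i with
    | zero => exact le_rfl
    | succ i ih =>
      rw [Function.iterate_succ_apply']
      exact ih.trans ((hle _).trans ((min_le_right _ _).trans (min_le_left _ _)))
  refine le_trans (le_min (le_iInf fun i => ?_) (le_iInf fun i => ?_))
    (le_iSup (fun σ : {σ : ℕ → S // σ 0 = s} => min (valP P σ.1) (⨅ i : ℕ, a (σ.1 i)))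
      ⟨fun i => t^[i] s, rfl⟩)
  · simp only [Function.iterate_succ_apply']
    exact (hrun i).trans ((hle _).trans (min_le_left _ _))
  · exact (hrun i).trans ((hZ _).trans (min_le_left _ _))

/-- Since `min` and finite maxima create no new values, `fOp P a` preserves functions with values
in any set containing the values of `P`, `a` and `rP P`. -/
theorem fOp_mem {S : Type*} [Fintype S] [Nonempty S] (P : S → S → unitInterval)
    (a : S → unitInterval) (V : Set unitInterval) (hP : ∀ s t, P s t ∈ V) (ha : ∀ s, a s ∈ V)
    (hr : ∀ s, rP P s ∈ V) (Z : S → unitInterval) (hZ : ∀ s, Z s ∈ V) (s : S) :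
    fOp P a Z s ∈ V := by
  have hmin : ∀ x ∈ V, ∀ y ∈ V, min x y ∈ V := fun x hx y hy => by
    rcases min_choice x y with h | h <;> rwa [h]
  obtain ⟨t, ht⟩ : ∃ t, min (P s t) (min (Z t) (rP P t))
      = ⨆ t : S, min (P s t) (min (Z t) (rP P t)) := exists_eq_ciSup_of_finite
  refine hmin _ (ha s) _ ?_
  rw [← ht]
  exact hmin _ (hP s t) _ (hmin _ (hZ t) _ (hr t))

/-- The iteration `Z₀ = 1`, `Z_{i+1} = f(Z_i)` is pointwise nonincreasing, stabilizes
after finitely many steps, and any stabilization point is the greatest fixpoint `A`. -/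
theorem fixpoint_iteration {S : Type*} [Fintype S] [Nonempty S]
    (P : S → S → unitInterval) (a : S → unitInterval) (Z : ℕ → S → unitInterval)
    (hZ0 : Z 0 = fun _ => 1) (hZsucc : ∀ i : ℕ, Z (i + 1) = fOp P a (Z i)) :
    (∀ (i : ℕ) (s : S), Z (i + 1) s ≤ Z i s) ∧
    (∃ k : ℕ, Z (k + 1) = Z k) ∧
    (∀ k : ℕ, Z (k + 1) = Z k → Z k = alwaysSem P a) := by
  have hstep : ∀ i, Z (i + 1) ≤ Z i := by
    intro i
    induction i with
    | zero =>
      rw [hZ0]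
      exact fun s => unitInterval.le_one'
    | succ i ih =>
      rw [hZsucc (i + 1)]
      exact (fOp_mono P a ih).trans (hZsucc i).ge
  have hanti : Antitone Z := antitone_nat_of_succ_le hstep
  refine ⟨fun i => hstep i, ?_, ?_⟩
  · let V : Set unitInterval :=
      {1} ∪ Set.range a ∪ Set.range (fun p : S × S => P p.1 p.2) ∪ Set.range (rP P)
    have hV : V.Finite :=
      (((Set.finite_singleton _).union (Set.finite_range _)).union (Set.finite_range _)).union
        (Set.finite_range _)
    have hmem : ∀ i s, Z i s ∈ V := by
      intro i
      induction i with
      | zero =>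
        rw [hZ0]
        exact fun s => Or.inl (Or.inl (Or.inl rfl))
      | succ i ih =>
        rw [hZsucc i]
        exact fOp_mem P a V (fun s t => Or.inl (Or.inr ⟨(s, t), rfl⟩))
          (fun s => Or.inl (Or.inl (Or.inr ⟨s, rfl⟩))) (fun s => Or.inr ⟨s, rfl⟩) _ ih
    have hfin : (Set.univ.pi fun _ : S => V).Finite := Set.Finite.pi fun _ => hV
    have hpi : ∀ i, Z i ∈ Set.univ.pi fun _ : S => V := fun i s _ => hmem i s
    obtain ⟨i, j, hij, h⟩ := Set.Finite.exists_lt_map_eq_of_forall_mem hpi hfin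
    -- A repeated value of an antitone sequence forces it to be constant in between.
    exact ⟨i, le_antisymm (hstep i) (h.le.trans (hanti (Nat.succ_le_of_lt hij)))⟩
  · intro k hk
    have hA : ∀ i, alwaysSem P a ≤ Z i := by
      intro i
      induction i with
      | zero =>
        rw [hZ0]
        exact fun s => unitInterval.le_one'
      | succ i ih =>
        rw [hZsucc i]
        exact (alwaysSem_le_fOp P a).trans (fOp_mono P a ih)
    exact le_antisymm (le_alwaysSem P a _ (hk.symm.trans (hZsucc k)).le) (hA k)
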